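/- Let π(y) denote the number of primes not exceeding y, and for t > 0 set I₂(t) = ∫_{√t}^∞ s·e^{−s}·π(s/t) ds. Then I₂(t) ~ 2/(t·log(1/t)) as t → 0⁺. -/

import Mathlib

open Filter Topology Asymptotics MeasureTheory

/-- `Q2 k` is the number of Goldbach partitions of `2*k`, i.e. the number of
unordered pairs `{p, q}` of odd primes with `p + q = 2*k`. -/
def Q2 (k : ℕ) : ℕ :=
  ((Finset.range (2 * k + 1) ×ˢ Finset.range (2 * k + 1)).filter
    (fun pq => pq.1.Prime ∧ pq.2.Prime ∧ Odd pq.1 ∧ Odd pq.2 ∧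
      pq.1 ≤ pq.2 ∧ pq.1 + pq.2 = 2 * k)).card

/-- `fOdd z = Σ_{p odd prime} z^p`. -/
noncomputable def fOdd (z : ℝ) : ℝ := ∑' p : ℕ, if p.Prime ∧ Odd p then z ^ p else 0

/-- `fOdd' z = Σ_{p odd prime} p * z^(p-1)`, the derivative of `fOdd` on `(0,1)`. -/
noncomputable def fOdd' (z : ℝ) : ℝ :=
  ∑' p : ℕ, if p.Prime ∧ Odd p then (p : ℝ) * z ^ (p - 1) else 0

/-- `fOdd'' z = Σ_{p odd prime} p * (p-1) * z^(p-2)`, the second derivative of `fOdd` on `(0,1)`. -/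
noncomputable def fOdd'' (z : ℝ) : ℝ :=
  ∑' p : ℕ, if p.Prime ∧ Odd p then (p : ℝ) * ((p : ℝ) - 1) * z ^ (p - 2) else 0

/-- The prime-counting function at a real argument: the number of primes `≤ y`. -/
noncomputable def primePi (y : ℝ) : ℕ := Nat.primeCounting ⌊y⌋₊

/-- `I₂(t) = ∫_{√t}^∞ s·e^{−s}·π(s/t) ds`. -/
noncomputable def I2 (t : ℝ) : ℝ :=
  ∫ s in Set.Ioi (Real.sqrt t), s * Real.exp (-s) * (primePi (s / t) : ℝ)


/-- Fejer kernel -/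
noncomputable def fejK (l w : ℝ) : ℝ := 2 * (1 - Real.cos (l * w)) / (l * w ^ 2)

noncomputable def fejPhi (l y : ℝ) : ℝ := max 0 (1 - |y| / l)

lemma fejPhi_cont (l : ℝ) : Continuous (fejPhi l) := by unfold fejPhi; fun_prop

lemma fejPhi_zero {l y : ℝ} (hl : 0 < l) (hy : y ∉ Set.Icc (-l) l) : fejPhi l y = 0 := by
  unfold fejPhi
  apply max_eq_left
  have : l < |y| := by
    by_contra h
    exact hy (abs_le.1 (not_lt.1 h))
  have := (one_lt_div hl).2 this
  linarith

lemma fejPhi_nonneg (l y : ℝ) : 0 ≤ fejPhi l y := le_max_left _ _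

lemma fejPhi_le {l : ℝ} (hl : 0 < l) (y : ℝ) : fejPhi l y ≤ 1 := by
  unfold fejPhi
  apply max_le zero_le_one
  have : 0 ≤ |y| / l := by positivity
  linarith

lemma fejPhi_compact {l : ℝ} (hl : 0 < l) : HasCompactSupport (fejPhi l) :=
  HasCompactSupport.intro isCompact_Icc (fun _ hy => fejPhi_zero hl hy)

lemma fejPhi_integrable {l : ℝ} (hl : 0 < l) : Integrable (fejPhi l) :=
  (fejPhi_cont l).integrable_of_hasCompactSupport (fejPhi_compact hl)

lemma fej_fourier {l w : ℝ} (hl : 0 < l) (hw : w ≠ 0) :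
    ∫ y : ℝ, (fejPhi l y : ℂ) * Complex.exp (-(Complex.I * w) * y) = fejK l w := by
  have h0 : ∫ y : ℝ, (fejPhi l y : ℂ) * Complex.exp (-(Complex.I * w) * y)
      = ∫ y in (-l)..l, (fejPhi l y : ℂ) * Complex.exp (-(Complex.I * w) * y) := by
    rw [intervalIntegral.integral_of_le (by linarith), ← integral_Icc_eq_integral_Ioc]
    symm
    apply setIntegral_eq_integral_of_forall_compl_eq_zero
    intro y hy
    rw [fejPhi_zero hl hy]; simp
  have hcont : Continuous fun y : ℝ => (fejPhi l y : ℂ) * Complex.exp (-(Complex.I * w) * y) := by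
    have := fejPhi_cont l
    fun_prop
  rw [h0, ← intervalIntegral.integral_add_adjacent_intervals (b := 0)
    (hcont.intervalIntegrable _ _) (hcont.intervalIntegrable _ _)]
  set c : ℂ := -(Complex.I * w) with hc
  have hc0 : c ≠ 0 := by simp [hc, hw]
  have hlc : (l : ℂ) ≠ 0 := by exact_mod_cast hl.ne'
  have hexp (y : ℝ) : HasDerivAt (fun y : ℝ => Complex.exp (c * y)) (c * Complex.exp (c * y)) y := by
    have h1 : HasDerivAt (fun y : ℝ => c * (y : ℂ)) c y := by
      simpa using (Complex.ofRealCLM.hasDerivAt (x := y)).const_mul c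
    simpa [mul_comm] using h1.cexp
  have hlin (y : ℝ) (a : ℂ) : HasDerivAt (fun y : ℝ => 1 + a * (y : ℂ)) a y := by
    simpa using ((Complex.ofRealCLM.hasDerivAt (x := y)).const_mul a).const_add 1
  have i1 : ∫ y in (-l)..0, (fejPhi l y : ℂ) * Complex.exp (c * y)
      = ((1 + (1 / (l:ℂ)) * (0:ℝ)) * (Complex.exp (c * (0:ℝ)) / c) - Complex.exp (c * (0:ℝ)) / (l * c ^ 2))
        - ((1 + (1 / (l:ℂ)) * (-l : ℝ)) * (Complex.exp (c * (-l : ℝ)) / c)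
          - Complex.exp (c * (-l:ℝ)) / (l * c ^ 2)) := by
    apply intervalIntegral.integral_eq_sub_of_hasDerivAt (f := fun y : ℝ =>
      (1 + (1 / (l:ℂ)) * (y:ℝ)) * (Complex.exp (c * (y:ℝ)) / c) - Complex.exp (c * (y:ℝ)) / (l * c ^ 2))
    · intro y hy
      rw [Set.uIcc_of_le (by linarith)] at hy
      have hphi : (fejPhi l y : ℂ) = 1 + (1 / (l:ℂ)) * y := by
        have : fejPhi l y = 1 + 1 / l * y := by
          unfold fejPhi
          rw [abs_of_nonpos hy.2, max_eq_right]
          · ring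
          · rw [sub_nonneg, div_le_one hl]; linarith [hy.1]
        rw [this]; push_cast; rfl
      rw [hphi]
      refine ((((hlin y (1 / (l:ℂ))).mul ((hexp y).div_const c))).sub
        ((hexp y).div_const ((l:ℂ) * c ^ 2))).congr_deriv ?_
      field_simp
      ring
    · exact hcont.intervalIntegrable _ _
  have i2 : ∫ y in (0:ℝ)..l, (fejPhi l y : ℂ) * Complex.exp (c * y)
      = ((1 + (-1 / (l:ℂ)) * (l:ℝ)) * (Complex.exp (c * (l:ℝ)) / c) + Complex.exp (c * (l:ℝ)) / (l * c ^ 2))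
        - ((1 + (-1 / (l:ℂ)) * (0 : ℝ)) * (Complex.exp (c * (0 : ℝ)) / c)
          + Complex.exp (c * (0:ℝ)) / (l * c ^ 2)) := by
    apply intervalIntegral.integral_eq_sub_of_hasDerivAt (f := fun y : ℝ =>
      (1 + (-1 / (l:ℂ)) * (y:ℝ)) * (Complex.exp (c * (y:ℝ)) / c) + Complex.exp (c * (y:ℝ)) / (l * c ^ 2))
    · intro y hy
      rw [Set.uIcc_of_le (by linarith)] at hy
      have hphi : (fejPhi l y : ℂ) = 1 + (-1 / (l:ℂ)) * y := by
        have : fejPhi l y = 1 + (-1) / l * y := by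
          unfold fejPhi
          rw [abs_of_nonneg hy.1, max_eq_right]
          · ring
          · rw [sub_nonneg, div_le_one hl]; linarith [hy.2]
        rw [this]; push_cast; rfl
      rw [hphi]
      refine ((((hlin y (-1 / (l:ℂ))).mul ((hexp y).div_const c))).add
        ((hexp y).div_const ((l:ℂ) * c ^ 2))).congr_deriv ?_
      field_simp
      ring
    · exact hcont.intervalIntegrable _ _
  rw [i1, i2]
  unfold fejK
  push_cast
  rw [Complex.cos]
  have e1 : (l:ℂ) * w * Complex.I = c * (-l) := by rw [hc]; ring
  have e2 : -((l:ℂ) * w) * Complex.I = c * l := by rw [hc]; ring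
  have e3 : (w:ℂ) ^ 2 = - c ^ 2 := by
    rw [hc]; ring_nf; simp
  rw [e1, e2, e3]
  simp only [mul_zero, Complex.exp_zero]
  field_simp
  ring

lemma fejK_nonneg {l : ℝ} (hl : 0 < l) (w : ℝ) : 0 ≤ fejK l w := by
  unfold fejK
  have := Real.cos_le_one (l * w)
  apply div_nonneg <;> first | linarith | positivity

lemma fejK_le_tail {l w : ℝ} (hl : 0 < l) : fejK l w ≤ 4 / (l * w ^ 2) := by
  unfold fejK
  have := Real.neg_one_le_cos (l * w)
  gcongr
  linarith

lemma fejK_le {l : ℝ} (hl : 0 < l) (w : ℝ) : fejK l w ≤ l := by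
  unfold fejK
  rcases eq_or_ne w 0 with rfl | hw
  · simp [hl.le]
  have := Real.one_sub_sq_div_two_le_cos (x := l * w)
  rw [div_le_iff₀ (by positivity)]
  nlinarith

lemma fejK_ge {l w : ℝ} (hl : 0 < l) (hw : w ≠ 0) (h : |w| ≤ 1 / l) : l * (2/5) ≤ fejK l w := by
  unfold fejK
  have h1 : |l * w| ≤ 1 := by
    rw [abs_mul, abs_of_pos hl]
    rw [le_div_iff₀ hl] at h; linarith
  have hpi := Real.pi_gt_three
  have h2 := Real.cos_le_one_sub_mul_cos_sq (x := l * w) (by linarith)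
  have h3 : (1:ℝ)/5 ≤ 2 / Real.pi ^ 2 := by
    rw [div_le_div_iff₀ (by norm_num) (by positivity)]
    nlinarith [Real.pi_lt_d2]
  rw [le_div_iff₀ (by positivity)]
  have h4 : 1/5 * (l*w)^2 ≤ 2 / Real.pi ^ 2 * (l*w)^2 := by gcongr
  nlinarith

lemma fejK_le' {l d w : ℝ} (hl : 0 < l) (hd : 0 < d) (hw : d ≤ |w|) :
    fejK l w ≤ (4 * (1 + 1 / d ^ 2) / l) * (1 + w ^ 2)⁻¹ := by
  refine (fejK_le_tail hl).trans ?_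
  have hw2 : d ^ 2 ≤ w ^ 2 := by rw [← sq_abs w]; gcongr
  have hw3 : 0 < w ^ 2 := by have : 0 < d ^ 2 := by positivity
                             linarith
  rw [← div_eq_mul_inv, div_div, div_le_div_iff₀ (by positivity) (by positivity)]
  have : 1 + w ^ 2 ≤ (1 + 1 / d ^ 2) * w ^ 2 := by
    have : 1 ≤ 1 / d ^ 2 * w ^ 2 := by
      rw [one_div, ← div_eq_inv_mul, one_le_div (by positivity)]; exact hw2
    linarith
  nlinarith

lemma fejK_meas (l : ℝ) : Measurable (fejK l) := by unfold fejK; fun_prop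

lemma fejK_integrable {l : ℝ} (hl : 0 < l) : Integrable (fejK l) := by
  refine Integrable.mono' (integrable_inv_one_add_sq.const_mul (4 * (1 + 1 / 1 ^ 2) / l + 2 * l))
    (fejK_meas l).aestronglyMeasurable (.of_forall fun w => ?_)
  rw [Real.norm_of_nonneg (fejK_nonneg hl w)]
  have hp : 0 < (1 + w ^ 2)⁻¹ := by positivity
  rcases le_total 1 |w| with h | h
  · refine (fejK_le' hl one_pos h).trans ?_
    gcongr
    linarith
  · refine (fejK_le hl w).trans ?_
    have : (1:ℝ)/2 ≤ (1 + w ^ 2)⁻¹ := by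
      rw [one_div]
      apply inv_anti₀ (by positivity)
      have := (sq_le_one_iff_abs_le_one w).2 h
      linarith
    have h8 : 0 ≤ 4 * (1 + 1 / (1:ℝ) ^ 2) / l := by positivity
    nlinarith [mul_nonneg h8 hp.le]

lemma F_exp_integrable {F : ℝ → ℝ} {M : ℝ} (hF : Measurable F) (hM : ∀ u, |F u| ≤ M)
    (hF0 : ∀ u ≤ 0, F u = 0) {e : ℝ} (he : 0 < e) :
    Integrable (fun u : ℝ => F u * Real.exp (-e * u)) := by
  have h1 : IntegrableOn (fun u : ℝ => F u * Real.exp (-e * u)) (Set.Ioi 0) := by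
    refine Integrable.bdd_mul (c := M) (exp_neg_integrableOn_Ioi 0 he)
      hF.aestronglyMeasurable (.of_forall fun u => ?_)
    simpa using hM u
  rw [← integrableOn_univ, ← Set.Iic_union_Ioi (a := (0:ℝ))]
  refine IntegrableOn.union ?_ h1
  refine (integrableOn_zero (α := ℝ)).congr_fun (fun u hu => ?_) measurableSet_Iic
  simp [hF0 u hu]

lemma fubini_step {F : ℝ → ℝ} {M : ℝ} (hF : Measurable F) (hM : ∀ u, |F u| ≤ M)
    (hF0 : ∀ u ≤ 0, F u = 0) {g : ℂ → ℂ}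
    (hlap : ∀ z : ℂ, 0 < z.re → ∫ u : ℝ, (F u : ℂ) * Complex.exp (-z * u) = g z)
    {l : ℝ} (hl : 0 < l) (v : ℝ) {e : ℝ} (he : 0 < e) :
    ∫ y : ℝ, (fejPhi l y : ℂ) * Complex.exp (Complex.I * v * y) * g (e + Complex.I * y)
      = ∫ u : ℝ, (F u : ℂ) * Real.exp (-e * u) * fejK l (u - v) := by
  have hintg : Integrable (Function.uncurry fun (y u : ℝ) =>
      Complex.exp (Complex.I * (v - u) * y) *
        ((fejPhi l y : ℂ) * ((F u * Real.exp (-e * u) : ℝ) : ℂ))) (volume.prod volume) := by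
    refine Integrable.bdd_mul (c := 1)
      ((fejPhi_integrable hl).ofReal.mul_prod (F_exp_integrable hF hM hF0 he).ofReal) ?_ ?_
    · apply Continuous.aestronglyMeasurable
      fun_prop
    · refine .of_forall fun p => ?_
      rw [Complex.norm_exp]
      simp
  have h1 := integral_integral_swap hintg
  calc _ = ∫ y : ℝ, ∫ u : ℝ, Complex.exp (Complex.I * (v - u) * y) *
        ((fejPhi l y : ℂ) * ((F u * Real.exp (-e * u) : ℝ) : ℂ)) := by
        refine integral_congr_ae (.of_forall fun y => ?_)
        simp only
        rw [← hlap _ (by simpa using he), ← integral_const_mul]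
        refine integral_congr_ae (.of_forall fun u => ?_)
        simp only
        push_cast
        have : Complex.exp (Complex.I * (v - u) * y) * Complex.exp (-e * u)
          = Complex.exp (Complex.I * v * y) * Complex.exp (-(e + Complex.I * y) * u) := by
          rw [← Complex.exp_add, ← Complex.exp_add]; ring_nf
        linear_combination - (fejPhi l y : ℂ) * (F u) * this
    _ = _ := h1
    _ = _ := by
        have hne : ∀ᵐ u : ℝ, u ≠ v := by
          simp [ae_iff]
        refine integral_congr_ae ?_
        filter_upwards [hne] with u hu
        rw [← fej_fourier hl (sub_ne_zero.2 hu), ← integral_const_mul]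
        refine integral_congr_ae (.of_forall fun y => ?_)
        simp only
        push_cast
        rw [show Complex.I * ((v:ℂ) - u) * y = -(Complex.I * (u - v)) * y by ring]
        ring

lemma limit_step {F : ℝ → ℝ} {M : ℝ} (hF : Measurable F) (hM : ∀ u, |F u| ≤ M)
    (hF0 : ∀ u ≤ 0, F u = 0) {g : ℂ → ℂ} (hg : ContinuousOn g {z | 0 ≤ z.re})
    (hlap : ∀ z : ℂ, 0 < z.re → ∫ u : ℝ, (F u : ℂ) * Complex.exp (-z * u) = g z)
    {l : ℝ} (hl : 0 < l) (v : ℝ) :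
    ∫ y : ℝ, (fejPhi l y : ℂ) * Complex.exp (Complex.I * v * y) * g (Complex.I * y)
      = ((∫ u : ℝ, F u * fejK l (u - v) : ℝ) : ℂ) := by
  have hM0 : 0 ≤ M := (abs_nonneg _).trans (hM 0)
  have hcomp : IsCompact ((fun p : ℝ × ℝ => (p.1 : ℂ) + Complex.I * p.2) ''
      (Set.Icc 0 1 ×ˢ Set.Icc (-l) l)) :=
    (isCompact_Icc.prod isCompact_Icc).image (by fun_prop)
  obtain ⟨C, hC⟩ := hcomp.exists_bound_of_continuousOn (hg.mono (by
    rintro _ ⟨p, hp, rfl⟩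
    simpa using hp.1.1))
  have hC' (e y : ℝ) (he : e ∈ Set.Icc (0:ℝ) 1) (hy : y ∈ Set.Icc (-l) l) :
      ‖g (e + Complex.I * y)‖ ≤ C := hC _ ⟨(e, y), ⟨he, hy⟩, rfl⟩
  have hgl (e : ℝ) (he : 0 ≤ e) : Continuous fun y : ℝ => g (e + Complex.I * y) := by
    refine hg.comp_continuous (by fun_prop) ?_
    intro y; simpa using he
  have hseq : Tendsto (fun n : ℕ => (1 / ((n:ℝ) + 1))) atTop (𝓝 0) :=
    tendsto_one_div_add_atTop_nhds_zero_nat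
  have hpos (n : ℕ) : 0 < 1 / ((n:ℝ) + 1) := by positivity
  have hle (n : ℕ) : 1 / ((n:ℝ) + 1) ≤ 1 := by
    rw [div_le_one (by positivity)]; linarith [n.cast_nonneg (α := ℝ)]
  have hL : Tendsto (fun n : ℕ => ∫ y : ℝ, (fejPhi l y : ℂ) * Complex.exp (Complex.I * v * y) *
      g ((1 / ((n:ℝ) + 1) : ℝ) + Complex.I * y)) atTop
      (𝓝 (∫ y : ℝ, (fejPhi l y : ℂ) * Complex.exp (Complex.I * v * y) * g (Complex.I * y))) := by
    refine tendsto_integral_of_dominated_convergence (fun y => fejPhi l y * C) ?_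
      ((fejPhi_integrable hl).mul_const C) ?_ ?_
    · intro n
      have h1 := hgl _ (hpos n).le
      have h2 := fejPhi_cont l
      apply Continuous.aestronglyMeasurable
      exact ((Complex.continuous_ofReal.comp h2).mul (by fun_prop)).mul h1
    · intro n
      refine .of_forall fun y => ?_
      by_cases hy : y ∈ Set.Icc (-l) l
      · rw [norm_mul, norm_mul, Complex.norm_exp]
        simp only [Complex.norm_real, Real.norm_of_nonneg (fejPhi_nonneg l y)]
        have : (Complex.I * v * y).re = 0 := by simp
        rw [this, Real.exp_zero, mul_one]
        exact mul_le_mul_of_nonneg_left (hC' _ _ ⟨(hpos n).le, hle n⟩ hy) (fejPhi_nonneg l y)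
      · simp [fejPhi_zero hl hy]
    · refine .of_forall fun y => ?_
      refine Tendsto.const_mul _ ?_
      have h1 : Tendsto g (𝓝[{z | 0 ≤ z.re}] (Complex.I * y)) (𝓝 (g (Complex.I * y))) :=
        hg (Complex.I * y) (by simp)
      refine h1.comp (tendsto_nhdsWithin_iff.2 ⟨?_, .of_forall fun n => ?_⟩)
      · have := ((Complex.continuous_ofReal.tendsto 0).comp hseq).add_const (Complex.I * y)
        simpa using this
      · rw [Set.mem_ofPred_eq, Complex.add_re, Complex.ofReal_re]
        have : (Complex.I * (y:ℂ)).re = 0 := by simp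
        rw [this, add_zero]
        exact (hpos n).le
  have hR : Tendsto (fun n : ℕ => ∫ u : ℝ, (F u : ℂ) * Real.exp (-(1 / ((n:ℝ) + 1)) * u) *
      fejK l (u - v)) atTop (𝓝 (∫ u : ℝ, (F u : ℂ) * fejK l (u - v))) := by
    refine tendsto_integral_of_dominated_convergence (fun u => M * fejK l (u - v)) ?_
      (((fejK_integrable hl).comp_sub_right v).const_mul M) ?_ ?_
    · intro n
      have := fejK_meas l
      apply Measurable.aestronglyMeasurable
      fun_prop
    · intro n
      refine .of_forall fun u => ?_
      rw [norm_mul, norm_mul]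
      simp only [Complex.norm_real, Real.norm_of_nonneg (fejK_nonneg hl _)]
      refine mul_le_mul_of_nonneg_right ?_ (fejK_nonneg hl _)
      rcases le_total u 0 with hu | hu
      · simp [hF0 u hu, hM0]
      · rw [Real.norm_of_nonneg (Real.exp_nonneg _), ← mul_one M]
        refine mul_le_mul (hM u) ?_ (Real.exp_nonneg _) hM0
        rw [Real.exp_le_one_iff]
        have := mul_nonneg (hpos n).le hu
        linarith
    · refine .of_forall fun u => ?_
      have h1 : Tendsto (fun n : ℕ => ((Real.exp (-(1 / ((n:ℝ) + 1)) * u) : ℝ) : ℂ)) atTop (𝓝 1) := by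
        have h2 : Tendsto (fun n : ℕ => -(1 / ((n:ℝ) + 1)) * u) atTop (𝓝 0) := by
          simpa using hseq.neg.mul_const u
        have := (Complex.continuous_ofReal.tendsto _).comp ((Real.continuous_exp.tendsto _).comp h2)
        simpa [Function.comp_def] using this
      simpa using (h1.const_mul (F u : ℂ)).mul_const (fejK l (u - v) : ℂ)
  have := tendsto_nhds_unique hL (hR.congr fun n => (fubini_step hF hM hF0 hlap hl v (hpos n)).symm)
  rw [this, ← integral_complex_ofReal]
  push_cast
  rfl

lemma band_limited {F : ℝ → ℝ} {M : ℝ} (hF : Measurable F) (hM : ∀ u, |F u| ≤ M)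
    (hF0 : ∀ u ≤ 0, F u = 0) {g : ℂ → ℂ} (hg : ContinuousOn g {z | 0 ≤ z.re})
    (hlap : ∀ z : ℂ, 0 < z.re → ∫ u : ℝ, (F u : ℂ) * Complex.exp (-z * u) = g z)
    {l : ℝ} (hl : 0 < l) :
    Tendsto (fun v : ℝ => ∫ u : ℝ, F u * fejK l (u - v)) atTop (𝓝 0) := by
  have h1 := Real.tendsto_integral_exp_smul_cocompact
    (fun y : ℝ => (fejPhi l y : ℂ) * g (Complex.I * y))
  have h2 : Tendsto (fun v : ℝ => - v / (2 * Real.pi)) atTop (cocompact ℝ) := by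
    rw [cocompact_eq_atBot_atTop]
    refine Tendsto.mono_right ?_ le_sup_left
    exact tendsto_neg_atTop_atBot.atBot_div_const (by positivity)
  have h3 := h1.comp h2
  have h4 := (Complex.continuous_re.tendsto 0).comp h3
  rw [Complex.zero_re] at h4
  refine h4.congr fun v => ?_
  have := limit_step hF hM hF0 hg hlap hl v
  simp only [Function.comp]
  rw [← Complex.ofReal_re (∫ u : ℝ, F u * fejK l (u - v)), ← this]
  congr 1
  refine integral_congr_ae (.of_forall fun y => ?_)
  simp only [Circle.smul_def, Real.fourierChar_apply, smul_eq_mul]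
  have hpi : (Real.pi : ℂ) ≠ 0 := by exact_mod_cast Real.pi_ne_zero
  have : ((2 * Real.pi * -(y * (-v / (2 * Real.pi))) : ℝ) : ℂ) * Complex.I = Complex.I * v * y := by
    push_cast; field_simp
  rw [this]; ring

lemma conv_lower {G : ℝ → ℝ} {M η δ l v : ℝ} (hG : Measurable G) (hM : ∀ u, |G u| ≤ M)
    (hη : 0 ≤ η) (hδ : 0 < δ) (hl : 0 < l) (hlδ : 1 / l ≤ δ)
    (hGv : ∀ u, |u - v| ≤ δ → η ≤ G u) :
    η * (4 / 5) - M * (4 * (1 + 1 / δ ^ 2) / l) * Real.pi ≤ ∫ u : ℝ, G u * fejK l (u - v) := by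
  have hM0 : 0 ≤ M := (abs_nonneg _).trans (hM 0)
  set B := 4 * (1 + 1 / δ ^ 2) / l with hB
  have hB0 : 0 ≤ B := by positivity
  have hi1 : Integrable (Set.indicator (Set.Icc (v - 1 / l) (v + 1 / l))
      (fun _ => η * (l * (2 / 5)))) := by
    rw [integrable_indicator_iff measurableSet_Icc]
    exact integrableOn_const (by simp)
  have hi2 : Integrable (fun u : ℝ => M * B * (1 + (u - v) ^ 2)⁻¹) :=
    (integrable_inv_one_add_sq.comp_sub_right v).const_mul _
  have hi3 : Integrable (fun u : ℝ => G u * fejK l (u - v)) :=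
    ((fejK_integrable hl).comp_sub_right v).bdd_mul (c := M) hG.aestronglyMeasurable
      (.of_forall fun u => by simpa using hM u)
  have hval : ∫ u : ℝ, (Set.indicator (Set.Icc (v - 1 / l) (v + 1 / l))
      (fun _ => η * (l * (2 / 5))) u - M * B * (1 + (u - v) ^ 2)⁻¹)
      = η * (4 / 5) - M * B * Real.pi := by
    rw [integral_sub hi1 hi2, integral_indicator measurableSet_Icc, integral_const_mul (M * B),
      integral_sub_right_eq_self (fun u : ℝ => (1 + u ^ 2)⁻¹) v, integral_univ_inv_one_add_sq]
    have hl' : 0 ≤ v + 1 / l - (v - 1 / l) := by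
      have : 0 < 1 / l := by positivity
      linarith
    simp only [integral_const, smul_eq_mul, measureReal_restrict_apply_univ, Real.volume_real_Icc,
      max_eq_left hl']
    congr 1
    field_simp
    ring
  rw [← hval]
  have hne : ∀ᵐ u : ℝ, u ≠ v := by simp [ae_iff]
  refine integral_mono_ae (hi1.sub hi2) hi3 ?_
  filter_upwards [hne] with u hu
  have hu' : u - v ≠ 0 := sub_ne_zero.2 hu
  have hK := fejK_nonneg hl (u - v)
  have hq : 0 ≤ M * B * (1 + (u - v) ^ 2)⁻¹ := by positivity
  by_cases h1 : u ∈ Set.Icc (v - 1 / l) (v + 1 / l)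
  · rw [Set.indicator_of_mem h1]
    have h2 : |u - v| ≤ 1 / l := abs_le.2 ⟨by linarith [h1.1], by linarith [h1.2]⟩
    have h3 := fejK_ge hl hu' h2
    have h4 := hGv u (h2.trans hlδ)
    have : η * (l * (2 / 5)) ≤ G u * fejK l (u - v) :=
      mul_le_mul h4 h3 (by positivity) (hη.trans h4)
    linarith
  · rw [Set.indicator_of_notMem h1]
    rcases le_total |u - v| δ with h2 | h2
    · have := mul_nonneg (hη.trans (hGv u h2)) hK
      linarith
    · have h3 := fejK_le' hl hδ h2
      have h4 : -(M * fejK l (u - v)) ≤ G u * fejK l (u - v) := by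
        rw [← neg_mul]
        exact mul_le_mul_of_nonneg_right (abs_le.1 (hM u)).1 hK
      have h5 : M * fejK l (u - v) ≤ M * (B * (1 + (u - v) ^ 2)⁻¹) :=
        mul_le_mul_of_nonneg_left h3 hM0
      rw [← mul_assoc] at h5
      linarith

/-- If `G` is bounded, its Fejer means vanish at infinity, then `G` cannot be `≥ η` on
`[v - δ, v + δ]` for large `v`. -/
lemma not_large {G : ℝ → ℝ} {M η δ : ℝ} (hG : Measurable G) (hM : ∀ u, |G u| ≤ M)
    (hη : 0 < η) (hδ : 0 < δ)
    (hT : ∀ l : ℝ, 0 < l → Tendsto (fun v : ℝ => ∫ u : ℝ, G u * fejK l (u - v)) atTop (𝓝 0)) :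
    ∀ᶠ v in atTop, ∃ u, |u - v| ≤ δ ∧ G u < η := by
  have hM0 : 0 ≤ M := (abs_nonneg _).trans (hM 0)
  obtain ⟨l, hl, hlδ, hlb⟩ : ∃ l : ℝ, 0 < l ∧ 1 / l ≤ δ ∧
      M * (4 * (1 + 1 / δ ^ 2) / l) * Real.pi ≤ η * (2 / 5) := by
    have h1 : Tendsto (fun l : ℝ => M * (4 * (1 + 1 / δ ^ 2) / l) * Real.pi) atTop (𝓝 0) := by
      have := ((tendsto_const_nhds (x := (4 * (1 + 1 / δ ^ 2)))).div_atTop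
        (tendsto_id (α := ℝ))).const_mul M |>.mul_const Real.pi
      simpa using this
    have h2 : Tendsto (fun l : ℝ => 1 / l) atTop (𝓝 0) :=
      (tendsto_const_nhds (x := (1:ℝ))).div_atTop (tendsto_id (α := ℝ))
    have := (eventually_gt_atTop (0:ℝ)).and ((h2.eventually_le_const hδ).and
      (h1.eventually_le_const (show (0:ℝ) < η * (2 / 5) by positivity)))
    exact this.exists
  filter_upwards [(hT l hl).eventually_lt_const (show (0:ℝ) < η * (2/5) by positivity)] with v hv
  by_contra! hcon
  have := conv_lower hG hM hη.le hδ hl hlδ hcon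
  linarith

lemma tauber {F : ℝ → ℝ} {M : ℝ} (hF : Measurable F) (hM : ∀ u, |F u| ≤ M)
    (hmono : ∀ u v, 0 < u → u ≤ v → (F u + 1) * Real.exp (u - v) ≤ F v + 1)
    (hge : ∀ u, -1 ≤ F u)
    (hT : ∀ l : ℝ, 0 < l → Tendsto (fun v : ℝ => ∫ u : ℝ, F u * fejK l (u - v)) atTop (𝓝 0)) :
    Tendsto F atTop (𝓝 0) := by
  have hT' : ∀ l : ℝ, 0 < l →
      Tendsto (fun v : ℝ => ∫ u : ℝ, (-F u) * fejK l (u - v)) atTop (𝓝 0) := by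
    intro l hl
    have := (hT l hl).neg
    simpa [← integral_neg] using this
  rw [Metric.tendsto_nhds]
  intro η' hη'
  obtain ⟨η, hη, hη1, hηη⟩ : ∃ η : ℝ, 0 < η ∧ η ≤ 1 ∧ η < η' :=
    ⟨min 1 (η' / 2), by positivity, min_le_left _ _, (min_le_right _ _).trans_lt (by linarith)⟩
  have hδ : 0 < η / 8 := by positivity
  have e1 := not_large hF hM (η := η / 2) (by positivity) hδ hT
  have e2 := not_large (G := fun u => - F u) hF.neg (by simpa using hM) (η := η / 2)
    (by positivity) hδ hT'
  have t1 : Tendsto (fun v : ℝ => v + η / 8) atTop atTop := tendsto_atTop_add_const_right _ _ tendsto_id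
  have t2 : Tendsto (fun v : ℝ => v - η / 8) atTop atTop := tendsto_atTop_add_const_right _ _ tendsto_id
  filter_upwards [t1.eventually e1, t2.eventually e2, eventually_gt_atTop 1] with v h1 h2 hv
  rw [Real.dist_0_eq_abs]
  refine lt_of_le_of_lt ?_ hηη
  rw [abs_le]
  constructor
  · obtain ⟨u, hu, hFu⟩ := h2
    rw [abs_le] at hu
    by_contra! hcon
    have h3 := hmono u v (by linarith) (by linarith)
    have h4 : 1 - η / 4 ≤ Real.exp (u - v) := by
      have := Real.add_one_le_exp (u - v)
      linarith
    have h5 : (F u + 1) * (1 - η / 4) ≤ (F u + 1) * Real.exp (u - v) :=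
      mul_le_mul_of_nonneg_left h4 (by linarith [hge u])
    nlinarith
  · obtain ⟨u, hu, hFu⟩ := h1
    rw [abs_le] at hu
    by_contra! hcon
    have h3 := hmono v u (by linarith) (by linarith)
    have h4 : 1 - η / 4 ≤ Real.exp (v - u) := by
      have := Real.add_one_le_exp (v - u)
      linarith
    have h5 : (F v + 1) * (1 - η / 4) ≤ (F v + 1) * Real.exp (v - u) :=
      mul_le_mul_of_nonneg_left h4 (by linarith [hge v])
    nlinarith

/-- `ψ(e^u) e^{-u} - 1` on `u > 0`. -/
noncomputable def psiF (u : ℝ) : ℝ :=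
  if 0 < u then Chebyshev.psi (Real.exp u) * Real.exp (-u) - 1 else 0

lemma psiF_meas : Measurable psiF := by
  unfold psiF
  refine Measurable.ite measurableSet_Ioi ?_ measurable_const
  have := Chebyshev.psi_mono.measurable
  fun_prop

lemma psiH_le (u : ℝ) : Chebyshev.psi (Real.exp u) * Real.exp (-u) ≤ Real.log 4 + 4 := by
  have := Chebyshev.psi_le_const_mul_self (Real.exp_nonneg u)
  calc _ ≤ (Real.log 4 + 4) * Real.exp u * Real.exp (-u) := by gcongr
    _ = _ := by rw [mul_assoc, ← Real.exp_add]; simp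

lemma psiH_nonneg (u : ℝ) : 0 ≤ Chebyshev.psi (Real.exp u) * Real.exp (-u) :=
  mul_nonneg (Chebyshev.psi_nonneg _) (Real.exp_nonneg _)

lemma psiF_ge (u : ℝ) : -1 ≤ psiF u := by
  unfold psiF
  split_ifs
  · linarith [psiH_nonneg u]
  · norm_num

lemma psiF_abs (u : ℝ) : |psiF u| ≤ Real.log 4 + 4 := by
  have h4 : 0 ≤ Real.log 4 := Real.log_nonneg (by norm_num)
  rw [abs_le]
  constructor
  · linarith [psiF_ge u]
  · unfold psiF
    split_ifs
    · linarith [psiH_le u]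
    · linarith

lemma psiF_mono (u v : ℝ) (hu : 0 < u) (huv : u ≤ v) :
    (psiF u + 1) * Real.exp (u - v) ≤ psiF v + 1 := by
  unfold psiF
  rw [if_pos hu, if_pos (hu.trans_le huv)]
  simp only [sub_add_cancel]
  rw [mul_assoc, ← Real.exp_add]
  have : -u + (u - v) = -v := by ring
  rw [this]
  exact mul_le_mul_of_nonneg_right (Chebyshev.psi_mono (Real.exp_le_exp.2 huv)) (Real.exp_nonneg _)

noncomputable def auxA (s : ℂ) : ℂ :=
  ArithmeticFunction.vonMangoldt.LFunctionResidueClassAux (1 : ZMod 1) s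

lemma auxA_cont : ContinuousOn auxA {s | 1 ≤ s.re} :=
  ArithmeticFunction.vonMangoldt.continuousOn_LFunctionResidueClassAux (1 : ZMod 1)

lemma auxA_eq {s : ℂ} (hs : 1 < s.re) :
    auxA s = LSeries (fun n => ((ArithmeticFunction.vonMangoldt n : ℝ) : ℂ)) s - 1 / (s - 1) := by
  have := ArithmeticFunction.vonMangoldt.eqOn_LFunctionResidueClassAux (a := (1 : ZMod 1))
    isUnit_one hs
  unfold auxA
  rw [this]
  have h : ∀ n : ℕ, ArithmeticFunction.vonMangoldt.residueClass (1 : ZMod 1) n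
      = ArithmeticFunction.vonMangoldt n := by
    intro n
    apply Set.indicator_of_mem
    exact Subsingleton.elim _ _
  simp [h]

lemma mellin_psi {s : ℂ} (hs : 1 < s.re) :
    LSeries (fun n => ((ArithmeticFunction.vonMangoldt n : ℝ) : ℂ)) s =
      s * ∫ t in Set.Ioi (1 : ℝ), (Chebyshev.psi t : ℂ) * (t : ℂ) ^ (-(s + 1)) := by
  have hsum (n : ℕ) : ∑ k ∈ Finset.Icc 1 n, ArithmeticFunction.vonMangoldt k = Chebyshev.psi n := by
    unfold Chebyshev.psi
    rw [Nat.floor_natCast]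
    rfl
  rw [LSeries_eq_mul_integral_of_nonneg (fun n => ArithmeticFunction.vonMangoldt n) zero_le_one hs ?_
    (fun n => ArithmeticFunction.vonMangoldt_nonneg)]
  · congr 1
    refine integral_congr_ae (.of_forall fun t => ?_)
    simp only
    rw [Chebyshev.psi_eq_psi_coe_floor, ← hsum]
    push_cast; rfl
  · refine IsBigO.of_bound (Real.log 4 + 4) (.of_forall fun n => ?_)
    simp only [hsum]
    rw [Real.rpow_one, Real.norm_of_nonneg (Chebyshev.psi_nonneg _),
      Real.norm_of_nonneg (Nat.cast_nonneg n)]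
    exact Chebyshev.psi_le_const_mul_self (Nat.cast_nonneg n)

lemma subst_psi (s : ℂ) :
    ∫ t in Set.Ioi (1 : ℝ), (Chebyshev.psi t : ℂ) * (t : ℂ) ^ (-(s + 1)) =
      ∫ u in Set.Ioi (0 : ℝ),
        ((Chebyshev.psi (Real.exp u) * Real.exp (-u) : ℝ) : ℂ) * Complex.exp (-(s - 1) * u) := by
  have him : Real.exp '' Set.Ioi 0 = Set.Ioi 1 := by
    ext x
    constructor
    · rintro ⟨u, hu, rfl⟩
      exact Real.one_lt_exp_iff.2 hu
    · intro hx
      have hx : 1 < x := hx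
      exact ⟨Real.log x, Real.log_pos hx, Real.exp_log (by linarith)⟩
  rw [← him, integral_image_eq_integral_abs_deriv_smul measurableSet_Ioi
    (fun x _ => (Real.hasDerivAt_exp x).hasDerivWithinAt) Real.exp_injective.injOn]
  refine integral_congr_ae (.of_forall fun u => ?_)
  simp only
  have h0 : ((Real.exp u : ℝ) : ℂ) ≠ 0 := by exact_mod_cast (Real.exp_pos u).ne'
  rw [abs_of_pos (Real.exp_pos u), Complex.real_smul, Complex.cpow_def_of_ne_zero h0,
    ← Complex.ofReal_log (Real.exp_nonneg u), Real.log_exp]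
  push_cast
  have : Complex.exp u * Complex.exp (u * -(s + 1)) = Complex.exp (-u) * Complex.exp (-(s - 1) * u) := by
    rw [← Complex.exp_add, ← Complex.exp_add]; ring_nf
  linear_combination (Chebyshev.psi (Real.exp u) : ℂ) * this

lemma psiF_laplace {z : ℂ} (hz : 0 < z.re) :
    ∫ u : ℝ, (psiF u : ℂ) * Complex.exp (-z * u) = (auxA (z + 1) - 1) / (z + 1) := by
  have hexp : IntegrableOn (fun u : ℝ => Complex.exp (-z * u)) (Set.Ioi 0) :=
    integrableOn_exp_mul_complex_Ioi (by simpa using hz) 0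
  have hpsi : IntegrableOn (fun u : ℝ => ((Chebyshev.psi (Real.exp u) * Real.exp (-u) : ℝ) : ℂ) *
      Complex.exp (-z * u)) (Set.Ioi 0) := by
    refine Integrable.bdd_mul (c := Real.log 4 + 4) hexp ?_ (.of_forall fun u => ?_)
    · have := Chebyshev.psi_mono.measurable
      apply Measurable.aestronglyMeasurable
      fun_prop
    · rw [Complex.norm_real, Real.norm_of_nonneg (psiH_nonneg u)]
      exact psiH_le u
  have hz0 : z ≠ 0 := fun h => by simp [h] at hz
  have hz1 : z + 1 ≠ 0 := fun h => by
    have := congrArg Complex.re h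
    simp at this
    linarith
  have hs : 1 < (z + 1).re := by simpa using hz
  have h1 : ∫ u : ℝ, (psiF u : ℂ) * Complex.exp (-z * u)
      = ∫ u in Set.Ioi (0:ℝ), (((Chebyshev.psi (Real.exp u) * Real.exp (-u) : ℝ) : ℂ) *
      Complex.exp (-z * u) - Complex.exp (-z * u)) := by
    rw [← integral_indicator measurableSet_Ioi]
    refine integral_congr_ae (.of_forall fun u => ?_)
    simp only [Set.indicator, Set.mem_Ioi, psiF]
    split_ifs
    · push_cast; ring
    · simp
  have h2 := subst_psi (z + 1)
  have h3 := mellin_psi hs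
  have h4 := auxA_eq hs
  rw [h1, integral_sub hpsi hexp, integral_exp_mul_complex_Ioi (by simpa using hz)]
  rw [add_sub_cancel_right] at h2 h4
  rw [h2] at h3
  rw [h4, h3]
  simp only [Complex.ofReal_zero, mul_zero, Complex.exp_zero]
  field_simp
  ring

lemma psiF_tendsto : Tendsto psiF atTop (𝓝 0) := by
  refine tauber psiF_meas psiF_abs psiF_mono psiF_ge fun l hl => ?_
  refine band_limited psiF_meas psiF_abs (fun u hu => if_neg (not_lt.2 hu))
    (g := fun z => (auxA (z + 1) - 1) / (z + 1)) ?_ (fun z hz => psiF_laplace hz) hl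
  refine ContinuousOn.div ?_ (by fun_prop) ?_
  · refine ContinuousOn.sub ?_ continuousOn_const
    refine auxA_cont.comp (by fun_prop) ?_
    intro z hz
    simpa using hz
  · intro z hz h
    have := congrArg Complex.re h
    simp at this hz
    linarith

theorem psi_div_tendsto : Tendsto (fun x => Chebyshev.psi x / x) atTop (𝓝 1) := by
  have h := (psiF_tendsto.comp Real.tendsto_log_atTop).add_const 1
  rw [zero_add] at h
  refine h.congr' ?_
  filter_upwards [eventually_gt_atTop 1] with x hx
  have hx0 : 0 < x := by linarith
  simp only [Function.comp, psiF, if_pos (Real.log_pos hx), Real.exp_neg, Real.exp_log hx0]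
  rw [sub_add_cancel, div_eq_mul_inv]

theorem theta_div_tendsto : Tendsto (fun x => Chebyshev.theta x / x) atTop (𝓝 1) := by
  have h1 : Tendsto (fun x : ℝ => (Chebyshev.psi - Chebyshev.theta) x / x) atTop (𝓝 0) := by
    refine (Chebyshev.isBigO_psi_sub_theta_sqrt.trans_isLittleO ?_).tendsto_div_nhds_zero
    refine isLittleO_iff_tendsto' ?_ |>.mpr ?_
    · filter_upwards [eventually_gt_atTop 0] with x hx h
      exact absurd h hx.ne'
    refine Tendsto.congr' (f₁ := fun x ↦ (Real.sqrt x)⁻¹) ?_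
      Real.tendsto_sqrt_atTop.inv_tendsto_atTop
    filter_upwards [eventually_gt_atTop 0] with x hx
    rw [Real.sqrt_div_self']
    exact (one_div _).symm
  have := psi_div_tendsto.sub h1
  rw [sub_zero] at this
  refine this.congr fun x => ?_
  simp only [Pi.sub_apply]
  ring

theorem pi_tendsto :
    Tendsto (fun x : ℝ => (Nat.primeCounting ⌊x⌋₊ : ℝ) * Real.log x / x) atTop (𝓝 1) := by
  have h1 : Tendsto (fun x : ℝ => ((Nat.primeCounting ⌊x⌋₊ : ℝ) - Chebyshev.theta x / Real.log x)
      / (x / Real.log x)) atTop (𝓝 0) := by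
    refine (Chebyshev.primeCounting_sub_theta_div_log_isBigO.trans_isLittleO ?_).tendsto_div_nhds_zero
    refine isLittleO_iff_tendsto' ?_ |>.mpr ?_
    · filter_upwards [eventually_gt_atTop 1] with x hx h
      have := Real.log_pos hx
      have : 0 < x / Real.log x := by positivity
      linarith
    refine Tendsto.congr' (f₁ := fun x ↦ (Real.log x)⁻¹) ?_ Real.tendsto_log_atTop.inv_tendsto_atTop
    filter_upwards [eventually_gt_atTop 0] with x _
    field
  have := h1.add theta_div_tendsto
  rw [zero_add] at this
  refine this.congr' ?_
  filter_upwards [eventually_gt_atTop 1] with x hx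
  have := Real.log_pos hx
  have : 0 < x := by linarith
  field_simp
  ring

lemma t_large : Tendsto (fun t : ℝ => 1 / Real.sqrt t) (𝓝[>] 0) atTop := by
  have h1 : Tendsto (fun t : ℝ => Real.sqrt t) (𝓝[>] 0) (𝓝[>] 0) := by
    refine tendsto_nhdsWithin_iff.2 ⟨?_, ?_⟩
    · have := (Real.continuous_sqrt.tendsto 0)
      rw [Real.sqrt_zero] at this
      exact this.mono_left nhdsWithin_le_nhds
    · filter_upwards [self_mem_nhdsWithin] with t ht
      exact Real.sqrt_pos.2 ht
  simpa [Function.comp_def] using tendsto_inv_nhdsGT_zero.comp h1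

lemma log_inv_large : Tendsto (fun t : ℝ => Real.log (1 / t)) (𝓝[>] 0) atTop := by
  simpa [Function.comp_def] using Real.tendsto_log_atTop.comp (tendsto_inv_nhdsGT_zero (𝕜 := ℝ))

lemma I2_bound : ∀ᶠ t : ℝ in 𝓝[>] 0, ∀ s : ℝ, Real.sqrt t < s →
    (primePi (s / t) : ℝ) * (t * Real.log (1 / t)) ≤ 4 * s := by
  have h1 := pi_tendsto.eventually_le_const (show (1:ℝ) < 2 by norm_num)
  obtain ⟨X, hX⟩ := eventually_atTop.1 h1
  filter_upwards [t_large.eventually_ge_atTop X, self_mem_nhdsWithin,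
    t_large.eventually_gt_atTop 1] with t ht ht0 ht1 s hs
  have ht0 : 0 < t := ht0
  have hst : 0 < Real.sqrt t := Real.sqrt_pos.2 ht0
  have hs0 : 0 < s := hst.trans hs
  have hsq : Real.sqrt t * Real.sqrt t = t := Real.mul_self_sqrt ht0.le
  have hge : 1 / Real.sqrt t ≤ s / t := by
    rw [div_le_div_iff₀ hst ht0]
    nlinarith
  have h2 := hX (s / t) (ht.trans hge)
  have hlog : Real.log (1 / t) / 2 ≤ Real.log (s / t) := by
    have h3 := Real.log_le_log (by positivity) hge
    rw [one_div, Real.log_inv, Real.log_sqrt ht0.le] at h3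
    rw [one_div, Real.log_inv]
    linarith
  have hx : 0 < s / t := by positivity
  rw [div_le_iff₀ hx] at h2
  have h5 : (primePi (s / t) : ℝ) * (Real.log (1 / t) / 2) ≤ 2 * (s / t) :=
    (mul_le_mul_of_nonneg_left hlog (Nat.cast_nonneg _)).trans h2
  have h6 : (primePi (s / t) : ℝ) * (Real.log (1 / t) / 2) * (2 * t) ≤ 2 * (s / t) * (2 * t) :=
    mul_le_mul_of_nonneg_right h5 (by positivity)
  have h7 : 2 * (s / t) * (2 * t) = 4 * s := by field_simp; ring
  linarith

lemma I2_pointwise {s : ℝ} (hs : 0 < s) :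
    Tendsto (fun t : ℝ => (primePi (s / t) : ℝ) * (t * Real.log (1 / t))) (𝓝[>] 0) (𝓝 s) := by
  have hx : Tendsto (fun t : ℝ => s / t) (𝓝[>] 0) atTop := by
    simpa [div_eq_mul_inv] using (tendsto_inv_nhdsGT_zero (𝕜 := ℝ)).const_mul_atTop hs
  have h1 := pi_tendsto.comp hx
  have h2 : Tendsto (fun t : ℝ => Real.log (1 / t) / Real.log (s / t)) (𝓝[>] 0) (𝓝 1) := by
    have h3 : Tendsto (fun t : ℝ => 1 - Real.log s / Real.log (s / t)) (𝓝[>] 0) (𝓝 (1 - 0)) :=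
      tendsto_const_nhds.sub (tendsto_const_nhds.div_atTop (Real.tendsto_log_atTop.comp hx))
    rw [sub_zero] at h3
    refine h3.congr' ?_
    filter_upwards [self_mem_nhdsWithin, hx.eventually_gt_atTop 1] with t ht ht1
    have ht : 0 < t := ht
    have hl := Real.log_pos ht1
    have : Real.log (1 / t) = Real.log (s / t) - Real.log s := by
      rw [Real.log_div one_ne_zero ht.ne', Real.log_div hs.ne' ht.ne', Real.log_one]; ring
    rw [this]
    field_simp
  have h4 := (h1.mul h2).const_mul s
  rw [mul_one, mul_one] at h4
  refine h4.congr' ?_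
  filter_upwards [self_mem_nhdsWithin, hx.eventually_gt_atTop 1] with t ht ht1
  have ht : 0 < t := ht
  have hl := Real.log_pos ht1
  simp only [Function.comp, primePi]
  field_simp

/-- `I₂(t) ~ 2/(t·log(1/t))` as `t → 0⁺`. -/
theorem I2_asymptotic :
    Tendsto (fun t : ℝ => I2 t * (t * Real.log (1 / t)))
      (𝓝[>] 0) (𝓝 2) := by
  have hgam : ∫ s in Set.Ioi (0:ℝ), s * Real.exp (-s) * s = 2 := by
    have h := Real.Gamma_eq_integral (s := 3) (by norm_num)
    have h3 : Real.Gamma 3 = 2 := by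
      have := Real.Gamma_nat_eq_factorial 2
      rw [show ((2:ℕ):ℝ) + 1 = 3 by norm_num] at this
      rw [this]
      simp [Nat.factorial]
    rw [h3] at h
    rw [h]
    refine setIntegral_congr_fun measurableSet_Ioi fun s hs => ?_
    rw [show (3:ℝ) - 1 = (2:ℕ) by norm_num, Real.rpow_natCast]
    ring
  have hintg : Integrable (fun s : ℝ => 4 * (s * Real.exp (-s) * s))
      (volume.restrict (Set.Ioi (0:ℝ))) := by
    apply Integrable.const_mul
    by_contra hcon
    rw [integral_undef hcon] at hgam
    norm_num at hgam
  have hmeas (t : ℝ) : Measurable fun s : ℝ => (primePi (s / t) : ℝ) := by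
    have : Measurable fun n : ℕ => (Nat.primeCounting n : ℝ) := measurable_from_top
    exact this.comp (Nat.measurable_floor.comp (measurable_id.div_const t))
  have key : Tendsto (fun t : ℝ => ∫ s in Set.Ioi (0:ℝ), Set.indicator (Set.Ioi (Real.sqrt t))
      (fun s => s * Real.exp (-s) * ((primePi (s / t) : ℝ) * (t * Real.log (1 / t)))) s)
      (𝓝[>] 0) (𝓝 (∫ s in Set.Ioi (0:ℝ), s * Real.exp (-s) * s)) := by
    refine tendsto_integral_filter_of_dominated_convergence
      (fun s : ℝ => 4 * (s * Real.exp (-s) * s)) ?_ ?_ hintg ?_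
    · refine .of_forall fun t => ?_
      apply Measurable.aestronglyMeasurable
      refine Measurable.indicator ?_ measurableSet_Ioi
      have := hmeas t
      fun_prop
    · filter_upwards [I2_bound, self_mem_nhdsWithin, Ioo_mem_nhdsGT (zero_lt_one (α := ℝ))]
        with t hb ht0 ht1
      have hl : 0 ≤ t * Real.log (1 / t) := by
        refine mul_nonneg ht1.1.le (Real.log_nonneg ?_)
        rw [le_div_iff₀ ht1.1]; linarith [ht1.2]
      filter_upwards [ae_restrict_mem measurableSet_Ioi] with s hs
      have hs : 0 < s := hs
      by_cases h : s ∈ Set.Ioi (Real.sqrt t)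
      · rw [Set.indicator_of_mem h, Real.norm_of_nonneg (by positivity)]
        have := mul_le_mul_of_nonneg_left (hb s h) (show 0 ≤ s * Real.exp (-s) by positivity)
        linarith
      · rw [Set.indicator_of_notMem h, norm_zero]
        positivity
    · filter_upwards [ae_restrict_mem measurableSet_Ioi] with s hs
      have hs : 0 < s := hs
      refine ((I2_pointwise hs).const_mul (s * Real.exp (-s))).congr' ?_
      have : ∀ᶠ t : ℝ in 𝓝[>] 0, Real.sqrt t < s := by
        have h1 := (Real.continuous_sqrt.tendsto 0)
        rw [Real.sqrt_zero] at h1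
        exact (h1.mono_left nhdsWithin_le_nhds).eventually_lt_const hs
      filter_upwards [this] with t ht
      rw [Set.indicator_of_mem (show s ∈ Set.Ioi (Real.sqrt t) from ht)]
  rw [hgam] at key
  refine key.congr fun t => ?_
  rw [setIntegral_indicator measurableSet_Ioi, I2, ← integral_mul_const,
    Set.inter_eq_right.2 (Set.Ioi_subset_Ioi (Real.sqrt_nonneg t))]
  refine integral_congr_ae (.of_forall fun s => ?_)
  simp only
  ring
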